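/- A distribution F on [0,∞) with unbounded support belongs to the class S(γ) with γ = γ̂ (the abscissa of convergence of the Laplace transform φ of F) if and only if: (a) γ = γ̂; (b) (F*F)‾(x) ~ c F̄(x) as x → ∞ for some c ∈ [2,∞); and (c) for every fixed y > 0, liminf_{x→∞} F̄(x−y)/F̄(x) ≥ e^{γy}. -/

import Mathlib

open MeasureTheory Filter Real Set
open scoped ENNReal Topology

noncomputable section

/-- Convolution of two measures on ℝ: distribution of the sum of independent r.v.'s. -/
def mconv (μ ν : MeasureTheory.Measure ℝ) : MeasureTheory.Measure ℝ :=
  MeasureTheory.Measure.map (fun p : ℝ × ℝ => p.1 + p.2) (μ.prod ν)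

/-- The tail F̄(x) = F(x,∞). -/
def tail (F : MeasureTheory.Measure ℝ) (x : ℝ) : ℝ≥0∞ := F (Set.Ioi x)

/-- Laplace transform φ(γ) = ∫ e^{γx} F(dx), with value in [0,∞]. -/
def phi (F : MeasureTheory.Measure ℝ) (γ : ℝ) : ℝ≥0∞ :=
  ∫⁻ x, ENNReal.ofReal (Real.exp (γ * x)) ∂F

/-- F is heavy-tailed: φ(γ) = ∞ for every γ > 0. -/
def IsHeavyTailed (F : MeasureTheory.Measure ℝ) : Prop :=
  ∀ γ : ℝ, 0 < γ → phi F γ = ⊤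

/-- γ̂ = sup{γ : φ(γ) < ∞} ∈ [0,∞] (for distributions on [0,∞)). -/
def gammaHat (F : MeasureTheory.Measure ℝ) : ℝ≥0∞ :=
  sSup {p : ℝ≥0∞ | ∃ γ : ℝ, p = ENNReal.ofReal γ ∧ phi F γ < ⊤}

/-- φ(γ̂) = lim_{γ↑γ̂} φ(γ), realized (by monotonicity of φ) as sup over γ < γ̂. -/
def phiHat (F : MeasureTheory.Measure ℝ) : ℝ≥0∞ :=
  ⨆ (γ : ℝ) (_ : ENNReal.ofReal γ < gammaHat F ∨ γ < 0), phi F γ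

/-- The class S(γ): φ(γ) < ∞, F̄(x+y)/F̄(x) → e^{−γy}, and (F*F)‾(x) ~ 2φ(γ)F̄(x). -/
def memS (F : MeasureTheory.Measure ℝ) (γ : ℝ) : Prop :=
  phi F γ < ⊤ ∧
  (∀ y : ℝ, Tendsto (fun x : ℝ => tail F (x + y) / tail F x) atTop
    (𝓝 (ENNReal.ofReal (Real.exp (-γ * y))))) ∧
  Tendsto (fun x : ℝ => tail (mconv F F) x / tail F x) atTop (𝓝 (2 * phi F γ))

/-! Splitting `F * F` according to which summand is at most half of the sum, Fatou's lemma bounds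
`liminf (F*F)‾(x) / F̄(x)` below by `2 ∫ liminf F̄(x - y) / F̄(x) F(dy)`, hence by `2 φ(γ)` under
the hypothesis on the tail ratios. For the matching upper bound `2 φ(γ)`, valid as soon as `φ = ∞`
beyond `γ`, suppose that `c F̄ ≤ (F*F)‾` near infinity and integrate this domination against `u(x) =
e^{γx} (e^{min(a x⁺, b)} - 1)`. Since `φ(γ + a) = ∞`, the cap `b` can be chosen with `∫ u dF = ε`,
and submultiplicativity of `e^{min(a x⁺, b)}` gives `∫ u d(F*F) ≤ (2 φ(γ) + ε) ε`. Letting `a → 0`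
removes the error from bounded `x`, so `c ≤ 2 φ(γ) + ε`, and then `ε → 0`.

Thus the limit `c` is `2 φ(γ)` and Fatou's inequality is an equality, also along every filter finer
than `atTop`; this pins the tail ratios down to `e^{γy}`. Conversely, exponential tail ratios of
rate `γ` make `F̄` decay slower than `e^{-κx}` for every `κ > γ`, so that `φ = ∞` beyond `γ`. -/

section Tail

variable {F G : Measure ℝ}

lemma tail_antitone (F : Measure ℝ) : Antitone (tail F) :=
  fun _ _ h => measure_mono (Ioi_subset_Ioi h)

lemma tail_ne_top [IsFiniteMeasure F] (x : ℝ) : tail F x ≠ ⊤ :=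
  measure_ne_top _ _

lemma measurable_tail_const_sub (F : Measure ℝ) (x : ℝ) : Measurable fun y => tail F (x - y) :=
  Monotone.measurable fun _ _ h => tail_antitone F (by gcongr)

lemma ofReal_exp_mul_tail_le_phi (F : Measure ℝ) {δ : ℝ} (hδ : 0 ≤ δ) (x : ℝ) :
    ENNReal.ofReal (exp (δ * x)) * tail F x ≤ phi F δ := by
  refine le_trans ?_ (mul_meas_ge_le_lintegral
    (f := fun y => ENNReal.ofReal (exp (δ * y))) (by fun_prop) (ENNReal.ofReal (exp (δ * x))))
  gcongr
  refine measure_mono fun y hy => ENNReal.ofReal_le_ofReal ?_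
  have : x ≤ y := le_of_lt hy
  gcongr

lemma measure_univ_le_phi (hsupp : F (Iio 0) = 0) {γ : ℝ} (hγ : 0 ≤ γ) : F univ ≤ phi F γ := by
  rw [← lintegral_one]
  refine lintegral_mono_ae ?_
  filter_upwards [measure_eq_zero_iff_ae_notMem.1 hsupp] with x hx
  exact ENNReal.one_le_ofReal.2 (one_le_exp (mul_nonneg hγ (notMem_Iio.1 hx)))

lemma gammaHat_le_ofReal_iff {γ : ℝ} (hγ : 0 ≤ γ) :
    gammaHat F ≤ ENNReal.ofReal γ ↔ ∀ δ > γ, phi F δ = ⊤ := by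
  refine ⟨fun h δ hδ => not_lt_top_iff.1 fun hfin => ?_, fun h => sSup_le ?_⟩
  · have hle : ENNReal.ofReal δ ≤ gammaHat F := le_sSup ⟨δ, rfl, hfin⟩
    exact hδ.not_ge ((ENNReal.ofReal_le_ofReal_iff hγ).1 (hle.trans h))
  · rintro _ ⟨δ, rfl, hfin⟩
    exact ENNReal.ofReal_le_ofReal (not_lt.1 fun hδ => hfin.ne (h δ hδ))

lemma lintegral_mconv {f : ℝ → ℝ≥0∞} (hf : Measurable f) :
    ∫⁻ z, f z ∂mconv F G = ∫⁻ p, f (p.1 + p.2) ∂F.prod G :=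
  lintegral_map hf (by fun_prop)

end Tail

section TailComparison

lemma exists_setOf_lt_eq_Ioi {α β : Type*} [ConditionallyCompleteLinearOrder α]
    [TopologicalSpace α] [OrderTopology α] [LinearOrder β] [TopologicalSpace β]
    [OrderClosedTopology β] {f : α → β} (hf : Continuous f) (hmono : Monotone f) {x₀ y : α} {t : β}
    (hx₀ : f x₀ ≤ t) (hy : t < f y) : ∃ s ≥ x₀, {x | t < f x} = Ioi s := by
  have hbdd : BddAbove {x | f x ≤ t} :=
    ⟨y, fun x hx => (hmono.reflect_lt (lt_of_le_of_lt hx hy)).le⟩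
  have hmem : f (sSup {x | f x ≤ t}) ≤ t :=
    (isClosed_le hf continuous_const).csSup_mem ⟨x₀, hx₀⟩ hbdd
  refine ⟨sSup {x | f x ≤ t}, le_csSup hbdd hx₀, Subset.antisymm ?_ ?_⟩
  · exact fun x hx => hmono.reflect_lt (hmem.trans_lt hx)
  · exact fun x hx => not_le.1 fun hxt => (notMem_of_csSup_lt hx hbdd) hxt

-- Layer cake: the superlevel sets of `f` at levels `t ≥ f x₀` are half-lines inside `[x₀, ∞)`, and
-- the levels `t < f x₀` account for the last term.
lemma mul_lintegral_le_of_mul_tail_le {F G : Measure ℝ} {c : ℝ≥0∞} {x₀ : ℝ}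
    (h : ∀ x ≥ x₀, c * tail F x ≤ tail G x) {f : ℝ → ℝ} (hf : Continuous f) (hmono : Monotone f)
    (hnonneg : 0 ≤ f) :
    c * ∫⁻ x, ENNReal.ofReal (f x) ∂F ≤
      ∫⁻ x, ENNReal.ofReal (f x) ∂G + c * F univ * ENNReal.ofReal (f x₀) := by
  have hlevel (t : ℝ) : c * F {x | t < f x} ≤
      G {x | t < f x} + (Iio (f x₀)).indicator (fun _ => c * F univ) t := by
    rcases lt_or_ge t (f x₀) with ht | ht
    · rw [indicator_of_mem (mem_Iio.2 ht)]
      exact le_add_left (by gcongr; exact subset_univ _)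
    · refine le_add_right ?_
      rcases {x | t < f x}.eq_empty_or_nonempty with hempty | ⟨y, hy⟩
      · simp [hempty]
      · obtain ⟨s, hs, heq⟩ := exists_setOf_lt_eq_Ioi hf hmono ht hy
        rw [heq]
        exact h s hs
  have hmeas (μ : Measure ℝ) : Measurable fun t => μ {x | t < f x} :=
    Antitone.measurable fun _ _ hst => measure_mono fun _ hx => lt_of_le_of_lt hst hx
  rw [lintegral_eq_lintegral_meas_lt F (.of_forall hnonneg) hf.aemeasurable,
    lintegral_eq_lintegral_meas_lt G (.of_forall hnonneg) hf.aemeasurable,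
    ← lintegral_const_mul _ (hmeas F)]
  refine (lintegral_mono hlevel).trans_eq ?_
  rw [lintegral_add_left (hmeas G), lintegral_indicator_const measurableSet_Iio,
    Measure.restrict_apply measurableSet_Iio, Iio_inter_Ioi, Real.volume_Ioo, sub_zero]

end TailComparison

section CappedTilt

/-- The ramp `x ↦ a x⁺`, cut off at height `b`. -/
def cappedRamp (a b x : ℝ) : ℝ := min (a * max x 0) b

/-- The excess `e^{γx + r(x)} - e^{γx}` over the exponential caused by the capped ramp
`r = cappedRamp a b`. As `b` increases it interpolates between `0` and the excess of an
exponential whose rate on `[0, ∞)` is `γ + a`. -/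
def tiltExcess (γ a b x : ℝ) : ℝ := exp (γ * x) * (exp (cappedRamp a b x) - 1)

variable {F : Measure ℝ} {γ a b : ℝ}

@[fun_prop]
lemma continuous_tiltExcess (γ a b : ℝ) : Continuous (tiltExcess γ a b) := by
  unfold tiltExcess cappedRamp
  fun_prop

lemma cappedRamp_nonneg (ha : 0 ≤ a) (hb : 0 ≤ b) (x : ℝ) : 0 ≤ cappedRamp a b x :=
  le_min (by positivity) hb

lemma cappedRamp_monotone (ha : 0 ≤ a) (b : ℝ) : Monotone (cappedRamp a b) :=
  fun _ _ h => by unfold cappedRamp; gcongr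

lemma cappedRamp_add_le (ha : 0 ≤ a) (hb : 0 ≤ b) (x y : ℝ) :
    cappedRamp a b (x + y) ≤ cappedRamp a b x + cappedRamp a b y := by
  have hadd : a * max (x + y) 0 ≤ a * max x 0 + a * max y 0 := by
    rw [← mul_add]
    gcongr
    exact max_le (add_le_add (le_max_left _ _) (le_max_left _ _)) (by positivity)
  have hx : 0 ≤ a * max x 0 := by positivity
  have hy : 0 ≤ a * max y 0 := by positivity
  unfold cappedRamp
  grind

lemma tiltExcess_nonneg (ha : 0 ≤ a) (hb : 0 ≤ b) (x : ℝ) : 0 ≤ tiltExcess γ a b x :=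
  mul_nonneg (exp_pos _).le (sub_nonneg.2 (one_le_exp (cappedRamp_nonneg ha hb x)))

lemma tiltExcess_monotone (hγ : 0 ≤ γ) (ha : 0 ≤ a) (hb : 0 ≤ b) :
    Monotone (tiltExcess γ a b) := fun x y h => by
  have hx := cappedRamp_nonneg ha hb x
  have hxy := cappedRamp_monotone ha b h
  unfold tiltExcess
  gcongr
  exact sub_nonneg.2 (one_le_exp hx)

lemma tiltExcess_add_le (ha : 0 ≤ a) (hb : 0 ≤ b) (x y : ℝ) :
    tiltExcess γ a b (x + y) ≤ exp (γ * x) * tiltExcess γ a b y +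
      tiltExcess γ a b x * (exp (γ * y) + tiltExcess γ a b y) := by
  have hsub : exp (cappedRamp a b (x + y)) ≤ exp (cappedRamp a b x) * exp (cappedRamp a b y) := by
    rw [← exp_add]
    exact exp_le_exp.2 (cappedRamp_add_le ha hb x y)
  calc tiltExcess γ a b (x + y)
      ≤ exp (γ * x) * exp (γ * y) * (exp (cappedRamp a b x) * exp (cappedRamp a b y) - 1) := by
        rw [tiltExcess, mul_add, exp_add]
        gcongr
    _ = _ := by
        unfold tiltExcess
        ring

-- With `P = φ(γ)` and `U = ∫ tiltExcess dF` this is `(P + U)² - P²`, the gain of a square.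
lemma lintegral_tiltExcess_mconv_le [SFinite F] (γ : ℝ) (ha : 0 ≤ a) (hb : 0 ≤ b) :
    ∫⁻ x, ENNReal.ofReal (tiltExcess γ a b x) ∂mconv F F ≤
      (2 * phi F γ + ∫⁻ x, ENNReal.ofReal (tiltExcess γ a b x) ∂F) *
        ∫⁻ x, ENNReal.ofReal (tiltExcess γ a b x) ∂F := by
  let e (x : ℝ) : ℝ≥0∞ := ENNReal.ofReal (exp (γ * x))
  let u (x : ℝ) : ℝ≥0∞ := ENNReal.ofReal (tiltExcess γ a b x)
  have he : Measurable e := by fun_prop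
  have hu : Measurable u := by fun_prop
  have hadd (p : ℝ × ℝ) : u (p.1 + p.2) ≤ e p.1 * u p.2 + u p.1 * (e p.2 + u p.2) := by
    have hx := tiltExcess_nonneg (γ := γ) ha hb p.1
    have hy := tiltExcess_nonneg (γ := γ) ha hb p.2
    simp only [e, u]
    rw [← ENNReal.ofReal_add (exp_pos _).le hy, ← ENNReal.ofReal_mul (exp_pos _).le,
      ← ENNReal.ofReal_mul hx, ← ENNReal.ofReal_add (by positivity) (by positivity)]
    exact ENNReal.ofReal_le_ofReal (tiltExcess_add_le ha hb _ _)
  calc ∫⁻ x, u x ∂mconv F F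
      = ∫⁻ p, u (p.1 + p.2) ∂F.prod F := lintegral_mconv hu
    _ ≤ ∫⁻ p, e p.1 * u p.2 + u p.1 * (e p.2 + u p.2) ∂F.prod F := lintegral_mono hadd
    _ = phi F γ * (∫⁻ x, u x ∂F) + (∫⁻ x, u x ∂F) * (phi F γ + ∫⁻ x, u x ∂F) := by
        rw [lintegral_add_left (by fun_prop), lintegral_prod_mul (by fun_prop) (by fun_prop),
          lintegral_prod_mul (g := fun y => e y + u y) (by fun_prop) (by fun_prop),
          lintegral_add_left he]
        rfl
    _ = (2 * phi F γ + ∫⁻ x, u x ∂F) * ∫⁻ x, u x ∂F := by ring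

lemma continuous_lintegral_tiltExcess (hφ : phi F γ ≠ ⊤) (a : ℝ) :
    Continuous fun b => ∫⁻ x, ENNReal.ofReal (tiltExcess γ a b x) ∂F := by
  refine continuous_iff_continuousAt.2 fun b₀ => ?_
  refine tendsto_lintegral_filter_of_dominated_convergence
    (fun x => ENNReal.ofReal (exp (b₀ + 1)) * ENNReal.ofReal (exp (γ * x)))
    (.of_forall fun b => by fun_prop) ?_ ?_ (.of_forall fun x => ?_)
  · filter_upwards [gt_mem_nhds (lt_add_one b₀)] with b hb
    refine .of_forall fun x => ?_
    rw [← ENNReal.ofReal_mul (exp_pos _).le, mul_comm, tiltExcess]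
    have hcap : cappedRamp a b x ≤ b₀ + 1 := (min_le_right _ _).trans hb.le
    gcongr
    exact (sub_le_self _ zero_le_one).trans (exp_le_exp.2 hcap)
  · rw [lintegral_const_mul _ (by fun_prop)]
    exact ENNReal.mul_ne_top ENNReal.ofReal_ne_top hφ
  · exact (ENNReal.continuous_ofReal.comp
      (by unfold tiltExcess cappedRamp; fun_prop)).tendsto b₀

lemma iSup_lintegral_tiltExcess_eq_top (ha : 0 ≤ a) (hφ : phi F γ ≠ ⊤) (htop : phi F (γ + a) = ⊤) :
    ⨆ n : ℕ, ∫⁻ x, ENNReal.ofReal (tiltExcess γ a n x) ∂F = ⊤ := by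
  have hmono : Monotone fun (n : ℕ) x => ENNReal.ofReal (tiltExcess γ a n x) := by
    intro n m hnm x
    have : (n : ℝ) ≤ m := by exact_mod_cast hnm
    refine ENNReal.ofReal_le_ofReal ?_
    unfold tiltExcess cappedRamp
    gcongr
  have hpt (x : ℝ) : ENNReal.ofReal (exp ((γ + a) * x)) ≤
      ENNReal.ofReal (exp (γ * x)) + ⨆ n : ℕ, ENNReal.ofReal (tiltExcess γ a n x) := by
    obtain ⟨n, hn⟩ := exists_nat_ge (a * max x 0)
    calc ENNReal.ofReal (exp ((γ + a) * x))
        ≤ ENNReal.ofReal (exp (γ * x) + tiltExcess γ a n x) := by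
          have : a * x ≤ a * max x 0 := by gcongr; exact le_max_left _ _
          rw [tiltExcess, cappedRamp, min_eq_left hn, mul_sub_one, add_sub_cancel, ← exp_add,
            add_mul]
          gcongr
      _ ≤ ENNReal.ofReal (exp (γ * x)) + ENNReal.ofReal (tiltExcess γ a n x) :=
          ENNReal.ofReal_add_le
      _ ≤ _ := by
          gcongr
          exact le_iSup (fun n : ℕ => ENNReal.ofReal (tiltExcess γ a n x)) n
  rw [← lintegral_iSup (fun n => by fun_prop) hmono]
  have hsum : phi F (γ + a) ≤
      phi F γ + ∫⁻ x, ⨆ n : ℕ, ENNReal.ofReal (tiltExcess γ a n x) ∂F := by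
    rw [phi, phi, ← lintegral_add_left (by fun_prop)]
    exact lintegral_mono hpt
  rw [htop, top_le_iff, ENNReal.add_eq_top] at hsum
  exact hsum.resolve_left hφ

lemma exists_lintegral_tiltExcess_eq (ha : 0 ≤ a) (hφ : phi F γ ≠ ⊤) (htop : phi F (γ + a) = ⊤)
    {ε : ℝ≥0∞} (hε : ε ≠ ⊤) :
    ∃ b, 0 ≤ b ∧ ∫⁻ x, ENNReal.ofReal (tiltExcess γ a b x) ∂F = ε := by
  have hzero : ∫⁻ x, ENNReal.ofReal (tiltExcess γ a 0 x) ∂F = 0 := by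
    have (x : ℝ) : cappedRamp a 0 x = 0 := min_eq_right (by positivity)
    simp [tiltExcess, this]
  obtain ⟨n, hn⟩ := lt_iSup_iff.1
    ((iSup_lintegral_tiltExcess_eq_top ha hφ htop).symm ▸ hε.lt_top)
  obtain ⟨b, hb, hbε⟩ := intermediate_value_Icc (Nat.cast_nonneg n)
    (continuous_lintegral_tiltExcess hφ a).continuousOn ⟨hzero.trans_le zero_le, hn.le⟩
  exact ⟨b, hb.1, hbε⟩

end CappedTilt

section UpperBound

variable {F : Measure ℝ} {γ : ℝ} {c : ℝ≥0∞} {x₀ : ℝ}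

lemma mul_le_of_mul_tail_le_tail_mconv [SFinite F] (hγ : 0 ≤ γ) (hφ : phi F γ ≠ ⊤)
    (h : ∀ x ≥ x₀, c * tail F x ≤ tail (mconv F F) x) {a : ℝ} (ha : 0 ≤ a)
    (htop : phi F (γ + a) = ⊤) {ε : ℝ≥0∞} (hε : ε ≠ ⊤) :
    c * ε ≤ (2 * phi F γ + ε) * ε +
      c * F univ * ENNReal.ofReal (exp (γ * x₀) * (exp (a * max x₀ 0) - 1)) := by
  obtain ⟨b, hb, rfl⟩ := exists_lintegral_tiltExcess_eq ha hφ htop hε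
  refine (mul_lintegral_le_of_mul_tail_le h (continuous_tiltExcess γ a b)
    (tiltExcess_monotone hγ ha hb) (tiltExcess_nonneg ha hb)).trans ?_
  gcongr
  · exact lintegral_tiltExcess_mconv_le γ ha hb
  · unfold tiltExcess cappedRamp
    gcongr
    exact min_le_left _ _

lemma le_two_mul_phi_of_mul_tail_le_tail_mconv [IsFiniteMeasure F] (hγ : 0 ≤ γ)
    (htop : ∀ δ > γ, phi F δ = ⊤) (hc : c ≠ ⊤)
    (h : ∀ x ≥ x₀, c * tail F x ≤ tail (mconv F F) x) : c ≤ 2 * phi F γ := by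
  by_cases hφ : phi F γ = ⊤
  · simp [hφ]
  refine ENNReal.le_of_forall_pos_le_add fun ε hε _ => ?_
  have hremainder : Tendsto (fun a => (2 * phi F γ + ε) * ε +
      c * F univ * ENNReal.ofReal (exp (γ * x₀) * (exp (a * max x₀ 0) - 1)))
      (𝓝[>] 0) (𝓝 ((2 * phi F γ + ε) * ε)) := by
    have hcont : Continuous fun a => (2 * phi F γ + ε) * ε +
        c * F univ * ENNReal.ofReal (exp (γ * x₀) * (exp (a * max x₀ 0) - 1)) :=
      continuous_const.add ((ENNReal.continuous_const_mul
        (ENNReal.mul_ne_top hc (measure_ne_top F univ))).comp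
          (ENNReal.continuous_ofReal.comp (by fun_prop)))
    simpa using (hcont.tendsto 0).mono_left nhdsWithin_le_nhds
  have hmul : c * ε ≤ (2 * phi F γ + ε) * ε :=
    ge_of_tendsto hremainder <| eventually_nhdsWithin_of_forall fun a ha =>
      mul_le_of_mul_tail_le_tail_mconv hγ hφ h (le_of_lt ha)
        (htop _ (lt_add_of_pos_right γ ha)) ENNReal.coe_ne_top
  exact (ENNReal.mul_le_mul_iff_left (by simpa using hε.ne') ENNReal.coe_ne_top).1 hmul

theorem liminf_tail_mconv_div_tail_le [IsFiniteMeasure F] (hγ : 0 ≤ γ)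
    (htop : ∀ δ > γ, phi F δ = ⊤) :
    liminf (fun x => tail (mconv F F) x / tail F x) atTop ≤ 2 * phi F γ := by
  refine le_of_forall_lt_imp_le_of_dense fun c hc => ?_
  obtain ⟨x₀, hx₀⟩ := eventually_atTop.1 (eventually_lt_of_lt_liminf hc)
  exact le_two_mul_phi_of_mul_tail_le_tail_mconv hγ htop hc.ne_top fun x hx =>
    ENNReal.mul_le_of_le_div (hx₀ x hx).le

end UpperBound

section LowerBound

/-- The lower limit of the tail ratio `F̄(x - y) / F̄(x)` as `x` tends to infinity along the
filter `l`. Filters finer than `atTop` are used to pass to sets of `x` on which the ratio is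
large. -/
def liminfTailRatio (F : Measure ℝ) (l : Filter ℝ) (y : ℝ) : ℝ≥0∞ :=
  liminf (fun x => tail F (x - y) / tail F x) l

variable {F : Measure ℝ} {l : Filter ℝ} {γ : ℝ}

lemma liminfTailRatio_monotone (F : Measure ℝ) (l : Filter ℝ) : Monotone (liminfTailRatio F l) :=
  fun _ _ h => liminf_le_liminf <| .of_forall fun x => by
    have := tail_antitone F (sub_le_sub_left h x)
    gcongr

lemma liminfTailRatio_anti_filter {l' : Filter ℝ} (h : l ≤ l') (y : ℝ) :
    liminfTailRatio F l' y ≤ liminfTailRatio F l y :=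
  liminf_le_liminf_of_le h

lemma liminfTailRatio_zero [IsFiniteMeasure F] [l.NeBot] (hub : ∀ x, tail F x ≠ 0) :
    liminfTailRatio F l 0 = 1 := by
  simp [liminfTailRatio, ENNReal.div_self (hub _) (tail_ne_top _)]

-- A sum exceeds `x` if one summand is `≤ x / 2` and the other makes up the difference; exchanging
-- the roles of the two summands gives two disjoint events of equal mass.
lemma two_mul_setLIntegral_tail_le_tail_mconv [SFinite F] (x : ℝ) :
    2 * ∫⁻ y in Iic (x / 2), tail F (x - y) ∂F ≤ tail (mconv F F) x := by
  let A : Set (ℝ × ℝ) := {p | p.1 ≤ x / 2 ∧ x - p.1 < p.2}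
  have hA : MeasurableSet A :=
    (measurableSet_le measurable_fst measurable_const).inter
      (measurableSet_lt (measurable_const.sub measurable_fst) measurable_snd)
  have hmass : (F.prod F) A = ∫⁻ y in Iic (x / 2), tail F (x - y) ∂F := by
    rw [Measure.prod_apply hA, ← lintegral_indicator measurableSet_Iic]
    refine lintegral_congr fun y => ?_
    by_cases hy : y ≤ x / 2 <;> simp [A, hy, tail, Ioi_def]
  have hswap : (F.prod F) (Prod.swap ⁻¹' A) = (F.prod F) A :=
    Measure.measurePreserving_swap.measure_preimage hA.nullMeasurableSet
  have hdisj : Disjoint A (Prod.swap ⁻¹' A) := by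
    rw [Set.disjoint_left]
    rintro ⟨y, z⟩ ⟨hy, hyz⟩ ⟨hz, -⟩
    simp only [Prod.fst_swap] at hy hyz hz
    linarith
  calc 2 * ∫⁻ y in Iic (x / 2), tail F (x - y) ∂F
      = (F.prod F) (A ∪ Prod.swap ⁻¹' A) := by
        rw [measure_union hdisj (measurable_swap hA), hswap, hmass, two_mul]
    _ ≤ (F.prod F) ((fun p => p.1 + p.2) ⁻¹' Ioi x) := by
        refine measure_mono ?_
        rintro ⟨y, z⟩ (⟨-, h⟩ | ⟨-, h⟩) <;>
          simp only [Prod.fst_swap, Prod.snd_swap, mem_preimage, mem_Ioi] at h ⊢ <;> linarith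
    _ = tail (mconv F F) x := (Measure.map_apply (by fun_prop) measurableSet_Ioi).symm

theorem two_mul_lintegral_liminfTailRatio_le [SFinite F] [l.NeBot] [l.IsCountablyGenerated]
    (hl : l ≤ atTop) :
    2 * ∫⁻ y, liminfTailRatio F l y ∂F ≤
      liminf (fun x => tail (mconv F F) x / tail F x) l := by
  let k (x y : ℝ) : ℝ≥0∞ := (Iic (x / 2)).indicator (fun y => tail F (x - y)) y / tail F x
  have hk (x : ℝ) : Measurable (k x) :=
    ((measurable_tail_const_sub F x).indicator measurableSet_Iic).div_const _
  have hliminf (y : ℝ) : liminfTailRatio F l y = liminf (fun x => k x y) l := by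
    refine liminf_congr ?_
    filter_upwards [hl (eventually_ge_atTop (2 * y))] with x hx
    have hy : y ∈ Iic (x / 2) := by rw [mem_Iic]; linarith
    simp only [k, indicator_of_mem hy]
  have hint (x : ℝ) : 2 * ∫⁻ y, k x y ∂F ≤ tail (mconv F F) x / tail F x := by
    simp only [k, div_eq_mul_inv]
    rw [lintegral_mul_const _ ((measurable_tail_const_sub F x).indicator measurableSet_Iic),
      lintegral_indicator measurableSet_Iic, ← mul_assoc]
    gcongr
    exact two_mul_setLIntegral_tail_le_tail_mconv x
  calc 2 * ∫⁻ y, liminfTailRatio F l y ∂F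
      ≤ 2 * liminf (fun x => ∫⁻ y, k x y ∂F) l := by
        simp only [hliminf]
        gcongr
        exact lintegral_liminf_le hk
    _ = liminf (fun x => 2 * ∫⁻ y, k x y ∂F) l :=
        (ENNReal.liminf_const_mul_of_ne_top ENNReal.ofNat_ne_top).symm
    _ ≤ liminf (fun x => tail (mconv F F) x / tail F x) l :=
        liminf_le_liminf (.of_forall hint)

lemma ae_exp_le_liminfTailRatio [IsFiniteMeasure F] (hsupp : F (Iio 0) = 0)
    (hub : ∀ x, tail F x ≠ 0)
    (hratio : ∀ y > 0, ENNReal.ofReal (exp (γ * y)) ≤ liminfTailRatio F atTop y)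
    (hl : l ≤ atTop) :
    ∀ᵐ y ∂F, ENNReal.ofReal (exp (γ * y)) ≤ liminfTailRatio F l y := by
  filter_upwards [measure_eq_zero_iff_ae_notMem.1 hsupp] with y hy
  refine le_trans ?_ (liminfTailRatio_anti_filter hl y)
  rcases (notMem_Iio.1 hy).eq_or_lt with rfl | hpos
  · simp [liminfTailRatio_zero hub]
  · exact hratio y hpos

lemma two_mul_phi_le_liminf [IsFiniteMeasure F] (hsupp : F (Iio 0) = 0)
    (hub : ∀ x, tail F x ≠ 0)
    (hratio : ∀ y > 0, ENNReal.ofReal (exp (γ * y)) ≤ liminfTailRatio F atTop y) :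
    2 * phi F γ ≤ liminf (fun x => tail (mconv F F) x / tail F x) atTop := by
  refine le_trans ?_ (two_mul_lintegral_liminfTailRatio_le le_rfl)
  gcongr
  exact lintegral_mono_ae (ae_exp_le_liminfTailRatio hsupp hub hratio le_rfl)

lemma liminfTailRatio_ae_eq [IsFiniteMeasure F] [l.NeBot] [l.IsCountablyGenerated]
    (hsupp : F (Iio 0) = 0) (hub : ∀ x, tail F x ≠ 0)
    (hratio : ∀ y > 0, ENNReal.ofReal (exp (γ * y)) ≤ liminfTailRatio F atTop y)
    (hφ : phi F γ ≠ ⊤) (hl : l ≤ atTop)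
    (hconv : liminf (fun x => tail (mconv F F) x / tail F x) l ≤ 2 * phi F γ) :
    ∀ᵐ y ∂F, liminfTailRatio F l y = ENNReal.ofReal (exp (γ * y)) := by
  have hint : ∫⁻ y, liminfTailRatio F l y ∂F ≤ phi F γ :=
    (ENNReal.mul_le_mul_iff_right two_ne_zero ENNReal.ofNat_ne_top).1
      ((two_mul_lintegral_liminfTailRatio_le hl).trans hconv)
  have heq := ae_eq_of_ae_le_of_lintegral_le
    (ae_exp_le_liminfTailRatio hsupp hub hratio hl) hφ
    (liminfTailRatio_monotone F l).measurable.aemeasurable hint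
  exact heq.symm

lemma mul_liminfTailRatio_le [IsFiniteMeasure F] [l.NeBot] (hub : ∀ x, tail F x ≠ 0)
    (hl : l ≤ atTop) {a : ℝ≥0∞} (ha : a ≠ ⊤) {y : ℝ}
    (hay : ∀ᶠ x in l, a ≤ tail F (x - y) / tail F x) (z : ℝ) :
    a * liminfTailRatio F atTop z ≤ liminfTailRatio F l (y + z) := by
  have hshift : Tendsto (fun x => x - y) l atTop :=
    (tendsto_atTop_add_const_right atTop (-y) tendsto_id).mono_left hl
  calc a * liminfTailRatio F atTop z
      ≤ a * liminf (fun x => tail F (x - y - z) / tail F (x - y)) l := by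
        gcongr
        exact liminf_le_liminf_of_le (u := fun x => tail F (x - z) / tail F x) hshift
    _ = liminf (fun x => a * (tail F (x - y - z) / tail F (x - y))) l :=
        (ENNReal.liminf_const_mul_of_ne_top ha).symm
    _ ≤ liminfTailRatio F l (y + z) := by
        refine liminf_le_liminf ?_
        filter_upwards [hay] with x hx
        calc a * (tail F (x - y - z) / tail F (x - y))
            ≤ tail F (x - y) / tail F x * (tail F (x - y - z) / tail F (x - y)) := by gcongr
          _ = tail F (x - (y + z)) / tail F x := by
            rw [mul_comm, ← mul_div_assoc, ENNReal.div_mul_cancel (hub _) (tail_ne_top _),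
              sub_sub]

-- If the upper limit were larger, the tail ratio at `y` would exceed some `a > e^{γy}` along a
-- filter `l`, and then `liminfTailRatio F l z > e^{γz}` for every `z > y`.
theorem limsup_tail_sub_div_tail_le [IsFiniteMeasure F] (hsupp : F (Iio 0) = 0)
    (hub : ∀ x, tail F x ≠ 0)
    (hratio : ∀ y > 0, ENNReal.ofReal (exp (γ * y)) ≤ liminfTailRatio F atTop y)
    (hφ : phi F γ ≠ ⊤)
    (hconv : Tendsto (fun x => tail (mconv F F) x / tail F x) atTop (𝓝 (2 * phi F γ))) (y : ℝ) :
    limsup (fun x => tail F (x - y) / tail F x) atTop ≤ ENNReal.ofReal (exp (γ * y)) := by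
  by_contra! hlt
  obtain ⟨a, hγa, ha⟩ := exists_between hlt
  let l : Filter ℝ := atTop ⊓ 𝓟 {x | a < tail F (x - y) / tail F x}
  have hl : l ≤ atTop := inf_le_left
  have : l.NeBot := frequently_mem_iff_neBot.1 (frequently_lt_of_lt_limsup (h := ha))
  have hay : ∀ᶠ x in l, a ≤ tail F (x - y) / tail F x :=
    eventually_inf_principal.2 (.of_forall fun _ hx => le_of_lt hx)
  have heq := liminfTailRatio_ae_eq hsupp hub hratio hφ hl (hconv.mono_left hl).liminf_eq.le
  obtain ⟨z, hyz, hz⟩ := ((frequently_ae_mem_iff.2 (hub y)).and_eventually heq).exists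
  have hpos : 0 < z - y := sub_pos.2 hyz
  refine lt_irrefl (ENNReal.ofReal (exp (γ * z))) ?_
  calc ENNReal.ofReal (exp (γ * z))
      = ENNReal.ofReal (exp (γ * y)) * ENNReal.ofReal (exp (γ * (z - y))) := by
        rw [← ENNReal.ofReal_mul (exp_pos _).le, ← exp_add, ← mul_add, add_sub_cancel]
    _ < a * ENNReal.ofReal (exp (γ * (z - y))) :=
        ENNReal.mul_lt_mul_left (by simp [exp_pos]) ENNReal.ofReal_ne_top hγa
    _ ≤ a * liminfTailRatio F atTop (z - y) := by
        gcongr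
        exact hratio _ hpos
    _ ≤ liminfTailRatio F l (y + (z - y)) := mul_liminfTailRatio_le hub hl ha.ne_top hay _
    _ = ENNReal.ofReal (exp (γ * z)) := by rw [add_sub_cancel, hz]

end LowerBound

section ExponentialTail

variable {F : Measure ℝ} {γ : ℝ}

lemma tendsto_tail_add_div_tail [IsFiniteMeasure F] (hub : ∀ x, tail F x ≠ 0)
    (h : ∀ y > 0, Tendsto (fun x => tail F (x - y) / tail F x) atTop
      (𝓝 (ENNReal.ofReal (exp (γ * y))))) (y : ℝ) :
    Tendsto (fun x => tail F (x + y) / tail F x) atTop (𝓝 (ENNReal.ofReal (exp (-γ * y)))) := by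
  rcases lt_trichotomy y 0 with hy | rfl | hy
  · simpa using h (-y) (neg_pos.2 hy)
  · simp [ENNReal.div_self (hub _) (tail_ne_top _)]
  · have hinv := ((h y hy).comp (tendsto_atTop_add_const_right atTop y tendsto_id)).inv
    rw [← ENNReal.ofReal_inv_of_pos (exp_pos _), ← exp_neg, ← neg_mul] at hinv
    refine hinv.congr fun x => ?_
    simp only [Function.comp, id, add_sub_cancel_right]
    exact ENNReal.inv_div (.inl (tail_ne_top _)) (.inl (hub _))

lemma exp_pow_mul_tail_le_tail_add_nat {κ x₀ : ℝ}
    (h : ∀ x ≥ x₀, ENNReal.ofReal (exp (-κ)) * tail F x ≤ tail F (x + 1)) (n : ℕ) :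
    ENNReal.ofReal (exp (-κ * n)) * tail F x₀ ≤ tail F (x₀ + n) := by
  induction n with
  | zero => simp
  | succ n ih =>
    calc ENNReal.ofReal (exp (-κ * (n + 1 : ℕ))) * tail F x₀
        = ENNReal.ofReal (exp (-κ)) * (ENNReal.ofReal (exp (-κ * n)) * tail F x₀) := by
          rw [← mul_assoc, ← ENNReal.ofReal_mul (exp_pos _).le, ← exp_add]
          push_cast
          ring_nf
      _ ≤ ENNReal.ofReal (exp (-κ)) * tail F (x₀ + n) := by gcongr
      _ ≤ tail F (x₀ + n + 1) := h _ (le_add_of_nonneg_right n.cast_nonneg)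
      _ = tail F (x₀ + (n + 1 : ℕ)) := by push_cast; rw [add_assoc]

lemma phi_eq_top_of_tendsto_tail_add_one (hub : ∀ x, tail F x ≠ 0)
    (h : Tendsto (fun x => tail F (x + 1) / tail F x) atTop (𝓝 (ENNReal.ofReal (exp (-γ)))))
    {δ : ℝ} (hδ : 0 ≤ δ) (hγδ : γ < δ) : phi F δ = ⊤ := by
  obtain ⟨κ, hγκ, hκδ⟩ := exists_between hγδ
  have hκ : ENNReal.ofReal (exp (-κ)) < ENNReal.ofReal (exp (-γ)) :=
    (ENNReal.ofReal_lt_ofReal_iff (exp_pos _)).2 (exp_lt_exp.2 (neg_lt_neg hγκ))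
  obtain ⟨x₀, hx₀⟩ := eventually_atTop.1 (h.eventually (lt_mem_nhds hκ))
  have hgeom := exp_pow_mul_tail_le_tail_add_nat
    fun x hx => ENNReal.mul_le_of_le_div (hx₀ x hx).le
  have hbound (n : ℕ) :
      ENNReal.ofReal (exp (δ * x₀ + (δ - κ) * n)) * tail F x₀ ≤ phi F δ := calc
    _ = ENNReal.ofReal (exp (δ * (x₀ + n))) * (ENNReal.ofReal (exp (-κ * n)) * tail F x₀) := by
        rw [← mul_assoc, ← ENNReal.ofReal_mul (exp_pos _).le, ← exp_add]
        ring_nf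
    _ ≤ ENNReal.ofReal (exp (δ * (x₀ + n))) * tail F (x₀ + n) := by gcongr; exact hgeom n
    _ ≤ phi F δ := ofReal_exp_mul_tail_le_phi F hδ _
  have hexp : Tendsto (fun n : ℕ => δ * x₀ + (δ - κ) * n) atTop atTop :=
    tendsto_atTop_add_const_left _ _
      (tendsto_natCast_atTop_atTop.const_mul_atTop (sub_pos.2 hκδ))
  have htop := ENNReal.Tendsto.mul_const (b := tail F x₀)
    (ENNReal.tendsto_ofReal_atTop.comp (tendsto_exp_atTop.comp hexp)) (.inl ENNReal.top_ne_zero)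
  rw [ENNReal.top_mul (hub x₀)] at htop
  exact top_le_iff.1 (le_of_tendsto' htop hbound)

end ExponentialTail

section Criterion

variable {F : Measure ℝ} {γ : ℝ}

lemma memS.ofReal_eq_gammaHat (hub : ∀ x, tail F x ≠ 0) (hγ : 0 ≤ γ) (h : memS F γ) :
    ENNReal.ofReal γ = gammaHat F := by
  refine le_antisymm (le_sSup ⟨γ, rfl, h.1⟩) ((gammaHat_le_ofReal_iff hγ).2 fun δ hδ => ?_)
  exact phi_eq_top_of_tendsto_tail_add_one hub (by simpa using h.2.1 1) (hγ.trans hδ.le) hδ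

lemma memS.liminfTailRatio_eq (h : memS F γ) (y : ℝ) :
    liminfTailRatio F atTop y = ENNReal.ofReal (exp (γ * y)) := by
  simpa only [liminfTailRatio, neg_mul_neg, ← sub_eq_add_neg] using (h.2.1 (-y)).liminf_eq

lemma tendsto_tail_sub_div_tail [IsFiniteMeasure F] (hsupp : F (Iio 0) = 0)
    (hub : ∀ x, tail F x ≠ 0)
    (hratio : ∀ y > 0, ENNReal.ofReal (exp (γ * y)) ≤ liminfTailRatio F atTop y)
    (hφ : phi F γ ≠ ⊤)
    (hconv : Tendsto (fun x => tail (mconv F F) x / tail F x) atTop (𝓝 (2 * phi F γ)))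
    {y : ℝ} (hy : 0 < y) :
    Tendsto (fun x => tail F (x - y) / tail F x) atTop (𝓝 (ENNReal.ofReal (exp (γ * y)))) :=
  tendsto_of_le_liminf_of_limsup_le (hratio y hy)
    (limsup_tail_sub_div_tail_le hsupp hub hratio hφ hconv y)

theorem memS_of_tendsto_tail_mconv_div_tail [IsFiniteMeasure F] (hsupp : F (Iio 0) = 0)
    (hub : ∀ x, tail F x ≠ 0) (hγ : 0 ≤ γ) (hγhat : gammaHat F ≤ ENNReal.ofReal γ) {c : ℝ≥0∞}
    (hc : c ≠ ⊤) (hconv : Tendsto (fun x => tail (mconv F F) x / tail F x) atTop (𝓝 c))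
    (hratio : ∀ y > 0, ENNReal.ofReal (exp (γ * y)) ≤ liminfTailRatio F atTop y) :
    memS F γ := by
  have hlower : 2 * phi F γ ≤ c :=
    (two_mul_phi_le_liminf hsupp hub hratio).trans_eq hconv.liminf_eq
  have hupper : c ≤ 2 * phi F γ := hconv.liminf_eq.symm.trans_le
    (liminf_tail_mconv_div_tail_le hγ ((gammaHat_le_ofReal_iff hγ).1 hγhat))
  obtain rfl := hupper.antisymm hlower
  have hφ : phi F γ ≠ ⊤ := fun htop => hc (by simp [htop])
  exact ⟨hφ.lt_top, tendsto_tail_add_div_tail hub fun y hy =>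
    tendsto_tail_sub_div_tail hsupp hub hratio hφ hconv hy, hconv⟩

end Criterion

theorem stmt14_general (F : Measure ℝ) [IsFiniteMeasure F] (hsupp : F (Iio 0) = 0)
    (hub : ∀ x, tail F x ≠ 0) (γ : ℝ) (hγ : 0 ≤ γ) :
    memS F γ ↔
      ENNReal.ofReal γ = gammaHat F ∧
      (∃ c : ℝ, 2 * F.real univ ≤ c ∧
        Tendsto (fun x => tail (mconv F F) x / tail F x) atTop (𝓝 (ENNReal.ofReal c))) ∧
      ∀ y : ℝ, 0 < y → ENNReal.ofReal (exp (γ * y)) ≤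
        liminf (fun x => tail F (x - y) / tail F x) atTop := by
  constructor
  · intro h
    refine ⟨h.ofReal_eq_gammaHat hub hγ, ⟨2 * (phi F γ).toReal, ?_, ?_⟩,
      fun y _ => (h.liminfTailRatio_eq y).ge⟩
    · gcongr
      exact ENNReal.toReal_mono h.1.ne (measure_univ_le_phi hsupp hγ)
    · rw [ENNReal.ofReal_mul zero_le_two, ENNReal.ofReal_toReal h.1.ne, ENNReal.ofReal_ofNat]
      exact h.2.2
  · rintro ⟨hγhat, ⟨c, -, hconv⟩, hratio⟩
    exact memS_of_tendsto_tail_mconv_div_tail hsupp hub hγ hγhat.ge ENNReal.ofReal_ne_top hconv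
      hratio

/-- Theorem 7: F ∈ S(γ̂) iff (F*F)‾(x) ~ cF̄(x) for some c ∈ [2,∞)
and liminf F̄(x−y)/F̄(x) ≥ e^{γ̂y} for all y > 0. -/
theorem stmt14 (F : MeasureTheory.Measure ℝ) [MeasureTheory.IsProbabilityMeasure F]
    (hsupp : F (Set.Iio 0) = 0) (hub : ∀ x : ℝ, tail F x ≠ 0)
    (γhat : ℝ) (hγ0 : 0 ≤ γhat) (hγhat : ENNReal.ofReal γhat = gammaHat F) :
    memS F γhat ↔
      ((∃ c : ℝ, 2 ≤ c ∧
          Tendsto (fun x : ℝ => tail (mconv F F) x / tail F x) atTop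
            (𝓝 (ENNReal.ofReal c))) ∧
        ∀ y : ℝ, 0 < y →
          ENNReal.ofReal (Real.exp (γhat * y)) ≤
            liminf (fun x : ℝ => tail F (x - y) / tail F x) atTop) := by
  simpa [hγhat] using stmt14_general F hsupp hub γhat hγ0
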